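/- arXiv:1703.07058 — 2 statements merged into one kernel-verified Lean document; each statement's English description precedes it below -/
import Mathlib

section
/- Let n, k, l be integers with 1 ≤ k ≤ l and 2l < n, and let L be the Laplacian matrix of the I-graph I(n,k,l). Let 𝒜 be the companion matrix of F(X) = (3X^k − X^{2k} − 1)(3X^l − X^{2l} − 1) − X^{k+l}. Then the Jacobian group Jac(I(n,k,l)) is isomorphic as an abelian group to the torsion subgroup of the cokernel ℤ^{2(k+l)} / im(𝒜^n − I). -/
open Polynomial

/-- The relation generating the I-graph `I(n,k,l)`: `u_i ~ u_{i+l}`, `v_i ~ v_{i+k}`,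
`u_i ~ v_i` (the left summand are the `u`'s with step `l`, the right summand the `v`'s
with step `k`). -/
def IRel (n k l : ℕ) : (ZMod n ⊕ ZMod n) → (ZMod n ⊕ ZMod n) → Prop
  | .inl i, .inl j => j = i + (l : ZMod n)
  | .inr i, .inr j => j = i + (k : ZMod n)
  | .inl i, .inr j => i = j
  | .inr _, .inl _ => False

/-- The I-graph `I(n,k,l)`. -/
def IGraph (n k l : ℕ) : SimpleGraph (ZMod n ⊕ ZMod n) :=
  SimpleGraph.fromRel (IRel n k l)

noncomputable instance (n k l : ℕ) : DecidableRel (IGraph n k l).Adj :=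
  fun _ _ => Classical.dec _

/-- The number of spanning trees of the I-graph `I(n,k,l)`. -/
noncomputable def tauI (n k l : ℕ) : ℕ :=
  Nat.card {H : (IGraph n k l).Subgraph // H.IsSpanning ∧ H.coe.IsTree}

/-- The Laplacian matrix `L = D - A` of the I-graph, with entries in `R`. -/
noncomputable def lapI (n k l : ℕ) [NeZero n] (R : Type) [AddGroupWithOne R] :
    Matrix (ZMod n ⊕ ZMod n) (ZMod n ⊕ ZMod n) R :=
  (IGraph n k l).lapMatrix R

/-- The cokernel of a square integer matrix, viewed as a `ℤ`-linear map. -/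
abbrev cokerM {m : Type} [Fintype m] [DecidableEq m] (M : Matrix m m ℤ) : Type :=
  (m → ℤ) ⧸ LinearMap.range M.mulVecLin

/-- The polynomial `F(X) = (3X^k - X^{2k} - 1)(3X^l - X^{2l} - 1) - X^{k+l}`. -/
noncomputable def FpolyI (k l : ℕ) : Polynomial ℤ :=
  (3 * X ^ k - X ^ (2 * k) - 1) * (3 * X ^ l - X ^ (2 * l) - 1) - X ^ (k + l)

/-- The companion matrix of a (monic, degree `s`) polynomial
`F = X^s + a_{s-1} X^{s-1} + ⋯ + a_0`: ones on the superdiagonal and last row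
`(-a_0, …, -a_{s-1})`. -/
noncomputable def companionM (F : Polynomial ℤ) (s : ℕ) : Matrix (Fin s) (Fin s) ℤ :=
  fun i j => if (i : ℕ) = s - 1 then -F.coeff j
    else if (j : ℕ) = (i : ℕ) + 1 then 1 else 0

/-- The Jacobian group of the I-graph `I(n,k,l)`: the torsion subgroup of the cokernel of
the Laplacian. -/
noncomputable def JacI (n k l : ℕ) [NeZero n] : AddSubgroup (cokerM (lapI n k l ℤ)) :=
  AddCommGroup.torsion (cokerM (lapI n k l ℤ))


/-- The common model `R[X] / (X^n - 1, F)` of the two cokernels. -/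
abbrev CyclicQuot {R : Type*} [CommRing R] (n : ℕ) (F : R[X]) : Type _ :=
  R[X] ⧸ Ideal.span ({X ^ n - 1, F} : Set R[X])

/-- The class of `X` in `R[X] / (X^n - 1, F)`. -/
noncomputable abbrev CyclicQuot.root {R : Type*} [CommRing R] (n : ℕ) (F : R[X]) : CyclicQuot n F :=
  Ideal.Quotient.mk _ X

lemma CyclicQuot.root_pow {R : Type*} [CommRing R] (n : ℕ) (F : R[X]) : CyclicQuot.root n F ^ n = 1 := by
  rw [CyclicQuot.root, ← map_pow, ← map_one (Ideal.Quotient.mk _), Ideal.Quotient.mk_eq_mk_iff_sub_mem]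
  exact Ideal.subset_span (by simp)

lemma CyclicQuot.aeval_root {R : Type*} [CommRing R] (n : ℕ) (F p : R[X]) :
    aeval (CyclicQuot.root n F) p = Ideal.Quotient.mk _ p := by
  have := Polynomial.aeval_algHom_apply
    ((Ideal.Quotient.mkₐ R (Ideal.span ({X ^ n - 1, F} : Set R[X])))) X p
  simpa using this

lemma CyclicQuot.aeval_root_self {R : Type*} [CommRing R] (n : ℕ) (F : R[X]) :
    aeval (CyclicQuot.root n F) F = 0 := by
  rw [CyclicQuot.aeval_root, Ideal.Quotient.eq_zero_iff_mem]
  exact Ideal.subset_span (by simp)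

/-- A linear map intertwining `S` with multiplication by the class of `X` carries `p(S)` to
multiplication by `p`. -/
lemma map_aeval_apply {R N C : Type*} [CommRing R] [AddCommGroup N] [Module R N] [CommRing C]
    [Algebra R C] (x : C)
    (S : Module.End R N) (φ : N →ₗ[R] C) (hS : ∀ y, φ (S y) = x * φ y) (p : R[X]) (y : N) :
    φ (aeval S p y) = aeval x p * φ y := by
  induction p using Polynomial.induction_on' generalizing y with
  | add p q hp hq => simp [hp, hq, add_mul]
  | monomial m a =>
    have h : ∀ m : ℕ, φ ((S ^ m) y) = x ^ m * φ y := by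
      intro m
      induction m with
      | zero => simp
      | succ m ih => rw [pow_succ', Module.End.mul_apply, hS, ih]; ring
    simp [aeval_monomial, h, mul_assoc, Algebra.smul_def]

lemma commute_aeval {R A : Type*} [CommRing R] [Ring A] [Algebra R A] {S D : A}
    (h : Commute S D) (p : R[X]) : Commute (aeval S p) D := by
  induction p using Polynomial.induction_on' with
  | add p q hp hq => simpa using hp.add_left hq
  | monomial m a =>
    rw [aeval_monomial]
    exact (Algebra.commute_algebraMap_left a D).mul_left (h.pow_left m)

/-- Recognition criterion: a module with a cyclic vector `u` modulo the range of `D` whose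
annihilator contains `X^n - 1` and `F` has cokernel `R[X] / (X^n - 1, F)`. -/
lemma nonempty_coker_equiv {R N : Type*} [CommRing R] [AddCommGroup N] [Module R N] (n : ℕ) (F : R[X])
    (S D : Module.End R N) (hSD : Commute S D) (φ : N →ₗ[R] CyclicQuot n F)
    (hS : ∀ y, φ (S y) = CyclicQuot.root n F * φ y) (hD : ∀ y, φ (D y) = 0)
    (u : N) (hu : φ u = 1)
    (hn : (S ^ n) u - u ∈ LinearMap.range D) (hF : aeval S F u ∈ LinearMap.range D)
    (hgen : ∀ y, ∃ p : R[X], y - aeval S p u ∈ LinearMap.range D) :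
    Nonempty ((N ⧸ LinearMap.range D) ≃+ CyclicQuot n F) := by
  have hcomm : ∀ (p : R[X]) (y), y ∈ LinearMap.range D → aeval S p y ∈ LinearMap.range D := by
    rintro p _ ⟨z, rfl⟩
    have h := commute_aeval hSD p
    exact ⟨aeval S p z, (LinearMap.congr_fun h.eq z).symm⟩
  have hφ : ∀ p : R[X], φ (aeval S p u) = Ideal.Quotient.mk _ p := by
    intro p
    rw [map_aeval_apply _ S φ hS, hu, mul_one, CyclicQuot.aeval_root]
  have hker : LinearMap.ker φ = LinearMap.range D := by
    apply le_antisymm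
    · intro y hy
      obtain ⟨p, z, hz⟩ := hgen y
      have hp : (Ideal.Quotient.mk (Ideal.span ({X ^ n - 1, F} : Set R[X]))) p = 0 := by
        rw [← hφ, ← sub_eq_zero.mpr (LinearMap.mem_ker.mp hy).symm]
        have := hD z
        rw [hz, map_sub, LinearMap.mem_ker.mp hy] at this
        simpa [LinearMap.mem_ker.mp hy] using this
      rw [Ideal.Quotient.eq_zero_iff_mem, Ideal.mem_span_pair] at hp
      obtain ⟨a, b, rfl⟩ := hp
      have h : aeval S (a * (X ^ n - 1) + b * F) u ∈ LinearMap.range D := by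
        have : aeval S (a * (X ^ n - 1) + b * F) u
            = aeval S a ((S ^ n) u - u) + aeval S b (aeval S F u) := by simp
        rw [this]
        exact add_mem (hcomm _ _ hn) (hcomm _ _ hF)
      have := add_mem (LinearMap.mem_range_self D z) h
      rwa [hz, sub_add_cancel] at this
    · rintro _ ⟨z, rfl⟩
      exact hD z
  have hsurj : Function.Surjective φ := by
    intro c
    obtain ⟨p, rfl⟩ := Ideal.Quotient.mk_surjective c
    exact ⟨_, hφ p⟩
  exact ⟨((Submodule.quotEquivOfEq _ _ hker.symm).trans
    (φ.quotKerEquivOfSurjective hsurj)).toAddEquiv⟩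

/-- Isomorphic abelian groups have isomorphic torsion subgroups. -/
lemma nonempty_torsion_equiv {G H : Type*} [AddCommGroup G] [AddCommGroup H] (e : G ≃+ H) :
    Nonempty (AddCommGroup.torsion G ≃+ AddCommGroup.torsion H) := by
  have h : (AddCommGroup.torsion G).map e.toAddMonoidHom = AddCommGroup.torsion H := by
    ext y
    constructor
    · rintro ⟨x, hx, rfl⟩
      exact e.toAddMonoidHom.isOfFinAddOrder hx
    · intro hy
      exact ⟨e.symm y, e.symm.toAddMonoidHom.isOfFinAddOrder hy, by simp⟩
  exact ⟨(e.addSubgroupMap _).trans (AddEquiv.addSubgroupCongr h)⟩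

lemma coeff_divX_iterate {R : Type*} [Semiring R] (F : R[X]) (j m : ℕ) :
    (divX^[j] F).coeff m = F.coeff (m + j) := by
  induction j generalizing m with
  | zero => simp
  | succ j ih => rw [Function.iterate_succ_apply', coeff_divX, ih]; congr 1; omega

lemma divX_iterate_eq {R : Type*} [Semiring R] (F : R[X]) (j : ℕ) :
    divX^[j] F = divX^[j + 1] F * X + C (F.coeff j) := by
  conv_lhs => rw [← divX_mul_X_add (divX^[j] F)]
  rw [Function.iterate_succ_apply', coeff_divX_iterate, zero_add]

lemma divX_iterate_natDegree {R : Type*} [Semiring R] (F : R[X]) (hF : F.Monic) :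
    divX^[F.natDegree] F = 1 := by
  ext m
  rw [coeff_divX_iterate, coeff_one]
  split_ifs with h
  · subst h; simpa using hF.leadingCoeff
  · exact coeff_eq_zero_of_natDegree_lt (by omega)

lemma monic_IFactor (k : ℕ) (hk : 1 ≤ k) :
    (X ^ (2 * k) - (3 * X ^ k - 1) : ℤ[X]).Monic ∧
      (X ^ (2 * k) - (3 * X ^ k - 1) : ℤ[X]).natDegree = 2 * k := by
  have h : (3 * X ^ k - 1 : ℤ[X]).degree < (X ^ (2 * k) : ℤ[X]).degree := by
    rw [degree_X_pow]
    refine lt_of_le_of_lt (b := (k : WithBot ℕ)) ?_ (by exact_mod_cast (by omega : k < 2 * k))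
    compute_degree
    rfl
  refine ⟨(monic_X_pow _).sub_of_left h, ?_⟩
  rw [natDegree_eq_of_degree_eq (degree_sub_eq_left_of_degree_lt h), natDegree_X_pow]

lemma monic_FpolyI (k l : ℕ) (hk : 1 ≤ k) (hl : 1 ≤ l) :
    (FpolyI k l).Monic ∧ (FpolyI k l).natDegree = 2 * (k + l) := by
  obtain ⟨h1, d1⟩ := monic_IFactor k hk
  obtain ⟨h2, d2⟩ := monic_IFactor l hl
  have hF : FpolyI k l = (X ^ (2 * k) - (3 * X ^ k - 1)) * (X ^ (2 * l) - (3 * X ^ l - 1))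
      - X ^ (k + l) := by rw [FpolyI]; ring
  have hd := h1.natDegree_mul h2
  have h : (X ^ (k + l) : ℤ[X]).degree
      < ((X ^ (2 * k) - (3 * X ^ k - 1)) * (X ^ (2 * l) - (3 * X ^ l - 1)) : ℤ[X]).degree := by
    rw [degree_X_pow, degree_eq_natDegree (h1.mul h2).ne_zero, hd, d1, d2]
    exact_mod_cast (by omega : k + l < 2 * k + 2 * l)
  rw [hF]
  refine ⟨(h1.mul h2).sub_of_left h, ?_⟩
  rw [natDegree_eq_of_degree_eq (degree_sub_eq_left_of_degree_lt h), hd, d1, d2]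
  ring

lemma companionM_mulVec_single (F : ℤ[X]) (s : ℕ) (j : Fin (s + 1)) :
    (companionM F (s + 1)).mulVecLin (Pi.single j 1)
      = (if h : (j : ℕ) = 0 then 0 else Pi.single ⟨(j : ℕ) - 1, by omega⟩ 1)
        - F.coeff j • Pi.single (Fin.last s) 1 := by
  ext i
  rw [Matrix.mulVecLin_apply, Matrix.mulVec_single_one]
  rcases i with ⟨i, hi⟩
  rcases j with ⟨j, hj⟩
  by_cases h : j = 0 <;> by_cases h' : i = s <;>
  simp [companionM, Pi.single_apply, Fin.ext_iff, h, h'] <;> grind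

lemma nonempty_coker_companionM_equiv (n : ℕ) (F : ℤ[X]) (s : ℕ) (hF : F.Monic)
    (hs : F.natDegree = s) (hs0 : 0 < s) :
    Nonempty (cokerM (companionM F s ^ n - 1) ≃+ CyclicQuot n F) := by
  obtain ⟨s, rfl⟩ := Nat.exists_eq_add_one.mpr hs0
  set A := (companionM F (s + 1)).mulVecLin with hA
  have hD : (companionM F (s + 1) ^ n - 1).mulVecLin = A ^ n - 1 := by
    ext1 i
    rw [hA, ← Matrix.toLin'_apply', ← Matrix.toLin'_apply', map_sub, Matrix.toLin'_pow, Matrix.toLin'_one]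
    rfl
  have hlast : divX^[s + 1] F = 1 := hs ▸ divX_iterate_natDegree F hF
  set x := CyclicQuot.root n F
  let φ : (Fin (s + 1) → ℤ) →ₗ[ℤ] CyclicQuot n F :=
    Fintype.linearCombination ℤ (fun j : Fin (s + 1) => aeval x (divX^[(j : ℕ) + 1] F))
  have hφ : ∀ j, φ (Pi.single j 1) = aeval x (divX^[(j : ℕ) + 1] F) := by
    intro j
    simp [φ, Fintype.linearCombination_apply_single]
  have hS : ∀ y, φ (A y) = x * φ y := by
    suffices h : φ ∘ₗ A = LinearMap.mulLeft ℤ x ∘ₗ φ from LinearMap.congr_fun h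
    refine (Pi.basisFun ℤ _).ext fun j => ?_
    simp only [LinearMap.comp_apply, Pi.basisFun_apply, LinearMap.mulLeft_apply]
    rw [hA, companionM_mulVec_single, map_sub, map_smul, hφ, hφ, Fin.val_last, hlast]
    have hrec := congrArg (aeval x) (divX_iterate_eq F j)
    simp only [map_add, map_mul, aeval_X, aeval_C] at hrec
    by_cases h : (j : ℕ) = 0
    · rw [h, Function.iterate_zero_apply, CyclicQuot.aeval_root_self] at hrec
      simp only [h, dif_pos, map_zero, map_one] at *
      simp at hrec ⊢
      linear_combination hrec
    · rw [dif_neg h, hφ]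
      simp only [Nat.sub_add_cancel (Nat.pos_of_ne_zero h), map_one]
      simp at hrec ⊢
      linear_combination hrec
  have hgen : ∀ d (hd : d ≤ s), aeval A (divX^[(s - d) + 1] F) (Pi.single (Fin.last s) 1)
      = Pi.single (⟨s - d, by omega⟩ : Fin (s + 1)) 1 := by
    intro d
    induction d with
    | zero => intro _; simp only [Nat.sub_zero, hlast]; simp; rfl
    | succ d ih =>
      intro hd
      have h1 := ih (by omega)
      have h2 := companionM_mulVec_single F s ⟨s - d, by omega⟩
      rw [← hA, dif_neg (by simp; omega), ← h1] at h2
      have e : s - (d + 1) + 1 = s - d := by omega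
      rw [e, divX_iterate_eq]
      rw [mul_comm, map_add, map_mul, aeval_X, aeval_C, LinearMap.add_apply, Module.End.mul_apply, h2]
      simp
      rfl
  have hgen' : ∀ j : Fin (s + 1), aeval A (divX^[(j : ℕ) + 1] F) (Pi.single (Fin.last s) 1)
      = Pi.single j 1 := by
    intro j
    have h1 := hgen (s - j) (by omega)
    have e : s - (s - (j : ℕ)) = j := by omega
    simpa only [e] using h1
  unfold cokerM
  rw [hD]
  refine nonempty_coker_equiv n F A (A ^ n - 1)
    (((Commute.refl A).pow_right n).sub_right (Commute.one_right A)) φ hS ?_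
    (Pi.single (Fin.last s) 1) ?_ ⟨Pi.single (Fin.last s) 1, rfl⟩ ?_ ?_
  · intro y
    have h := map_aeval_apply x A φ hS (X ^ n) y
    simp only [map_pow, aeval_X, x, CyclicQuot.root_pow, one_mul] at h
    simp [h]
  · rw [hφ, Fin.val_last, hlast, map_one]
  · have h1 := divX_iterate_eq F 0
    have h2 := companionM_mulVec_single F s 0
    have h3 := hgen' 0
    rw [← hA] at h2
    rw [Function.iterate_zero_apply] at h1
    have : aeval A F (Pi.single (Fin.last s) 1) = 0 := by
      rw [h1, mul_comm, map_add, map_mul, aeval_X, aeval_C, LinearMap.add_apply, Module.End.mul_apply]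
      simp only [Fin.val_zero] at h3
      rw [h3, h2]
      simp
    rw [this]
    exact zero_mem _
  · intro y
    refine ⟨∑ j, C (y j) * divX^[(j : ℕ) + 1] F, ?_⟩
    have : aeval A (∑ j : Fin (s + 1), C (y j) * divX^[(j : ℕ) + 1] F)
        (Pi.single (Fin.last s) 1) = y := by
      rw [map_sum, LinearMap.sum_apply]
      conv_rhs => rw [pi_eq_sum_univ' y]
      refine Finset.sum_congr rfl fun j _ => ?_
      rw [map_mul, aeval_C, Module.End.mul_apply, hgen']
      ext i
      simp [Pi.single_apply, eq_comm]
    rw [this, sub_self]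
    exact zero_mem _

lemma neighborFinset_IGraph_inl (n k l : ℕ) [NeZero n] (hl : 1 ≤ l) (hn : 2 * l < n)
    (i : ZMod n) : (IGraph n k l).neighborFinset (.inl i)
      = {.inl (i + l), .inl (i - l), .inr i} := by
  have h0 : (l : ZMod n) ≠ 0 := by
    rw [Ne, ZMod.natCast_eq_zero_iff]
    exact fun h => absurd (Nat.le_of_dvd (by omega) h) (by omega)
  ext (j | j)
  · rw [SimpleGraph.mem_neighborFinset]
    simp [IGraph, IRel]
    grind
  · rw [SimpleGraph.mem_neighborFinset]
    simp [IGraph, IRel]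
    grind

lemma neighborFinset_IGraph_inr (n k l : ℕ) [NeZero n] (hk : 1 ≤ k) (hn : 2 * k < n)
    (i : ZMod n) : (IGraph n k l).neighborFinset (.inr i)
      = {.inr (i + k), .inr (i - k), .inl i} := by
  have h0 : (k : ZMod n) ≠ 0 := by
    rw [Ne, ZMod.natCast_eq_zero_iff]
    exact fun h => absurd (Nat.le_of_dvd (by omega) h) (by omega)
  ext (j | j)
  · rw [SimpleGraph.mem_neighborFinset]
    simp [IGraph, IRel]
  · rw [SimpleGraph.mem_neighborFinset]
    simp [IGraph, IRel]
    grind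

lemma natCast_add_ne_sub (n l : ℕ) (hl : 1 ≤ l) (hn : 2 * l < n) (i : ZMod n) :
    i + (l : ZMod n) ≠ i - l := by
  intro h
  have h2 : ((2 * l : ℕ) : ZMod n) = 0 := by push_cast; linear_combination h
  rw [ZMod.natCast_eq_zero_iff] at h2
  exact absurd (Nat.le_of_dvd (by omega) h2) (by omega)

lemma lapI_mulVec_inl (n k l : ℕ) [NeZero n] (hl : 1 ≤ l) (hn : 2 * l < n)
    (f : ZMod n ⊕ ZMod n → ℤ) (i : ZMod n) :
    (lapI n k l ℤ).mulVecLin f (.inl i)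
      = 3 * f (.inl i) - f (.inl (i + l)) - f (.inl (i - l)) - f (.inr i) := by
  have h := natCast_add_ne_sub n l hl hn i
  rw [Matrix.mulVecLin_apply, lapI, SimpleGraph.lapMatrix_mulVec_apply,
    ← SimpleGraph.card_neighborFinset_eq_degree, neighborFinset_IGraph_inl n k l hl hn,
    Finset.sum_insert (by simpa using h), Finset.sum_insert (by simp), Finset.sum_singleton,
    Finset.card_insert_of_notMem (by simpa using h), Finset.card_insert_of_notMem (by simp),
    Finset.card_singleton]
  push_cast
  ring

lemma lapI_mulVec_inr (n k l : ℕ) [NeZero n] (hk : 1 ≤ k) (hn : 2 * k < n)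
    (f : ZMod n ⊕ ZMod n → ℤ) (i : ZMod n) :
    (lapI n k l ℤ).mulVecLin f (.inr i)
      = 3 * f (.inr i) - f (.inr (i + k)) - f (.inr (i - k)) - f (.inl i) := by
  have h := natCast_add_ne_sub n k hk hn i
  rw [Matrix.mulVecLin_apply, lapI, SimpleGraph.lapMatrix_mulVec_apply,
    ← SimpleGraph.card_neighborFinset_eq_degree, neighborFinset_IGraph_inr n k l hk hn,
    Finset.sum_insert (by simpa using h), Finset.sum_insert (by simp), Finset.sum_singleton,
    Finset.card_insert_of_notMem (by simpa using h), Finset.card_insert_of_notMem (by simp),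
    Finset.card_singleton]
  push_cast
  ring

/-- The rotation `u_i ↦ u_{i+1}`, `v_i ↦ v_{i+1}` acting on integer vectors. -/
def rotI (n : ℕ) : Module.End ℤ (ZMod n ⊕ ZMod n → ℤ) :=
  LinearMap.funLeft ℤ ℤ (Sum.map (· - 1) (· - 1))

lemma rotI_pow_single (n m : ℕ) (c : ZMod n → ZMod n ⊕ ZMod n) (hc : c = .inl ∨ c = .inr)
    (i : ZMod n) : (rotI n ^ m) (Pi.single (c i) 1) = Pi.single (c (i + m)) 1 := by
  induction m with
  | zero => simp
  | succ m ih =>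
    rw [pow_succ', Module.End.mul_apply, ih]
    rcases hc with rfl | rfl <;> ext (j | j) <;>
      simp [rotI, LinearMap.funLeft_apply, Pi.single_apply, sub_eq_iff_eq_add, add_assoc]

lemma lapI_single_inl (n k l : ℕ) [NeZero n] (hk : 1 ≤ k) (hkl : k ≤ l) (hn : 2 * l < n)
    (i : ZMod n) : (lapI n k l ℤ).mulVecLin (Pi.single (.inl i) 1)
      = 3 • Pi.single (.inl i) 1 - Pi.single (.inl (i + l)) 1 - Pi.single (.inl (i - l)) 1
        - Pi.single (.inr i) 1 := by
  ext (j | j)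
  · rw [lapI_mulVec_inl n k l (by omega) hn]
    simp [Pi.single_apply]
    grind
  · rw [lapI_mulVec_inr n k l hk (by omega)]
    simp [Pi.single_apply]

lemma lapI_single_inr (n k l : ℕ) [NeZero n] (hk : 1 ≤ k) (hkl : k ≤ l) (hn : 2 * l < n)
    (i : ZMod n) : (lapI n k l ℤ).mulVecLin (Pi.single (.inr i) 1)
      = 3 • Pi.single (.inr i) 1 - Pi.single (.inr (i + k)) 1 - Pi.single (.inr (i - k)) 1
        - Pi.single (.inl i) 1 := by
  ext (j | j)
  · rw [lapI_mulVec_inl n k l (by omega) hn]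
    simp [Pi.single_apply]
  · rw [lapI_mulVec_inr n k l hk (by omega)]
    simp [Pi.single_apply]
    grind

lemma commute_rotI_lapI (n k l : ℕ) [NeZero n] (hk : 1 ≤ k) (hkl : k ≤ l) (hn : 2 * l < n) :
    Commute (rotI n) (lapI n k l ℤ).mulVecLin := by
  refine LinearMap.ext fun f => ?_
  ext (j | j)
  · simp only [Module.End.mul_apply, rotI, LinearMap.funLeft_apply, Sum.map_inl, Sum.map_inr,
      lapI_mulVec_inl n k l (by omega) hn, sub_add_eq_add_sub, sub_right_comm]
  · simp only [Module.End.mul_apply, rotI, LinearMap.funLeft_apply, Sum.map_inl, Sum.map_inr,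
      lapI_mulVec_inr n k l hk (by omega), sub_add_eq_add_sub, sub_right_comm]

lemma aeval_rotI_FpolyI_mem (n k l : ℕ) [NeZero n] (hk : 1 ≤ k) (hkl : k ≤ l)
    (hn : 2 * l < n) :
    aeval (rotI n) (FpolyI k l) (Pi.single (.inl 0) 1)
      ∈ LinearMap.range (lapI n k l ℤ).mulVecLin := by
  set S := rotI n
  set D := (lapI n k l ℤ).mulVecLin with hDdef
  have hSu := fun m => rotI_pow_single n m .inl (Or.inl rfl) 0
  have hSv := fun m => rotI_pow_single n m .inr (Or.inr rfl) 0
  have hu : D ((S ^ l) (Pi.single (.inl 0) 1))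
      = aeval S (3 * X ^ l - X ^ (2 * l) - 1 : ℤ[X]) (Pi.single (.inl 0) 1)
        - (S ^ l) (Pi.single (.inr 0) 1) := by
    have h3 : aeval S (3 : ℤ[X]) = 3 := map_ofNat _ 3
    simp only [map_sub, map_mul, map_pow, aeval_X, h3, map_one, LinearMap.sub_apply,
      Module.End.mul_apply, Module.End.one_apply]
    rw [hSu, hSu, hSv, hDdef, lapI_single_inl n k l hk hkl hn]
    simp [two_mul]
  have hv : D ((S ^ k) (Pi.single (.inr 0) 1))
      = aeval S (3 * X ^ k - X ^ (2 * k) - 1 : ℤ[X]) (Pi.single (.inr 0) 1)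
        - (S ^ k) (Pi.single (.inl 0) 1) := by
    have h3 : aeval S (3 : ℤ[X]) = 3 := map_ofNat _ 3
    simp only [map_sub, map_mul, map_pow, aeval_X, h3, map_one, LinearMap.sub_apply,
      Module.End.mul_apply, Module.End.one_apply]
    rw [hSv, hSv, hSu, hDdef, lapI_single_inr n k l hk hkl hn]
    simp [two_mul]
  have hc := commute_rotI_lapI n k l hk hkl hn
  have h1 := commute_aeval hc (3 * X ^ k - X ^ (2 * k) - 1 : ℤ[X])
  have h2 := commute_aeval hc (X ^ l : ℤ[X])
  refine ⟨aeval S (3 * X ^ k - X ^ (2 * k) - 1 : ℤ[X]) ((S ^ l) (Pi.single (.inl 0) 1))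
    + aeval S (X ^ l : ℤ[X]) ((S ^ k) (Pi.single (.inr 0) 1)), ?_⟩
  have e1 := fun y => (LinearMap.congr_fun h1.eq y)
  have e2 := fun y => (LinearMap.congr_fun h2.eq y)
  simp only [Module.End.mul_apply] at e1 e2
  rw [map_add, ← e1, ← e2, hu, hv]
  have hx : ∀ m, S ^ m = aeval S (X ^ m : ℤ[X]) := fun m => by simp
  have hmul : ∀ (a b : ℤ[X]) (y), aeval S a (aeval S b y) = aeval S (a * b) y := fun a b y => by
    rw [map_mul, Module.End.mul_apply]
  change aeval S _ _ + aeval S _ _ = _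
  rw [hx, hx, LinearMap.map_sub, LinearMap.map_sub, hmul, hmul, hmul, hmul, FpolyI,
    map_sub (aeval S : ℤ[X] →ₐ[ℤ] _), LinearMap.sub_apply, add_comm k l, pow_add,
    mul_comm (X ^ l : ℤ[X]) (3 * X ^ k - X ^ (2 * k) - 1)]
  abel

lemma sum_zmod_shift {n : ℕ} [NeZero n] {M : Type*} [AddCommMonoid M] (g : ZMod n → M)
    (a : ZMod n) : ∑ i, g (i + a) = ∑ i, g i :=
  Fintype.sum_equiv (Equiv.addRight a) _ _ fun _ => rfl

lemma nonempty_coker_lapI_equiv (n k l : ℕ) [NeZero n] (hk : 1 ≤ k) (hkl : k ≤ l)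
    (hn : 2 * l < n) :
    Nonempty (cokerM (lapI n k l ℤ) ≃+ CyclicQuot n (FpolyI k l)) := by
  set F := FpolyI k l with hF
  set x := CyclicQuot.root n F with hx
  have hxn : x ^ n = 1 := CyclicQuot.root_pow n F
  let χ : AddChar (ZMod n) (CyclicQuot n F) := AddChar.zmodChar n hxn
  have hχ : ∀ m : ℕ, χ m = x ^ m := AddChar.zmodChar_apply' hxn
  have hχ1 : χ 1 = x := by simpa using hχ 1
  have hχneg : ∀ a, χ a * χ (-a) = 1 := fun a => by rw [← AddChar.map_add_eq_mul]; simp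
  set q := 3 - χ l - χ (-l) with hq
  set q' := 3 - χ k - χ (-k) with hq'
  have hqq : q * q' = 1 := by
    have h : aeval x (FpolyI k l) = 0 := CyclicQuot.aeval_root_self n F
    have h3 : aeval x (3 : ℤ[X]) = 3 := map_ofNat _ 3
    rw [FpolyI] at h
    simp only [map_sub, map_mul, map_pow, aeval_X, h3, map_one] at h
    have hk := hχneg k
    have hl := hχneg l
    rw [mul_comm 2 k, mul_comm 2 l, pow_add, pow_mul, pow_mul, ← hχ k, ← hχ l] at h
    have e : χ k * χ l * (q * q' - 1) = 0 := by
      rw [hq, hq']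
      linear_combination h + (-3 * χ l + χ l ^ 2 + χ l * χ (-l)) * hk + (χ k ^ 2 - 3 * χ k + 1) * hl
    linear_combination (χ (-k) * χ (-l)) * e + (-(q * q' - 1) * χ l * χ (-l)) * hk
      - (q * q' - 1) * hl
  let φ : (ZMod n ⊕ ZMod n → ℤ) →ₗ[ℤ] CyclicQuot n F :=
    Fintype.linearCombination ℤ (Sum.elim (fun i => χ i) (fun i => q * χ i))
  have hφ : ∀ f, φ f = ∑ i, f (.inl i) • χ i + ∑ i, f (.inr i) • (q * χ i) := by
    intro f
    simp [φ, Fintype.linearCombination_apply, Fintype.sum_sum_type]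
  have hroot : ∀ y, φ (rotI n y) = x * φ y := by
    intro y
    have hs : ∀ i : ZMod n, χ (i + 1) = x * χ i := fun i => by
      rw [AddChar.map_add_eq_mul, hχ1, mul_comm]
    rw [hφ, hφ, ← sum_zmod_shift _ 1, ← sum_zmod_shift (fun i => rotI n y (.inr i) • _) 1]
    simp only [rotI, LinearMap.funLeft_apply, Sum.map_inl, Sum.map_inr, add_sub_cancel_right, hs,
      mul_add, Finset.mul_sum, mul_smul_comm, mul_left_comm q x]
  have hlap : ∀ y, φ ((lapI n k l ℤ).mulVecLin y) = 0 := by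
    suffices h : φ ∘ₗ (lapI n k l ℤ).mulVecLin = 0 from LinearMap.congr_fun h
    have hsl : ∀ i, φ (Pi.single (.inl i) 1) = χ i := fun i => by
      simp [φ, Fintype.linearCombination_apply_single]
    have hsr : ∀ i, φ (Pi.single (.inr i) 1) = q * χ i := fun i => by
      simp [φ, Fintype.linearCombination_apply_single]
    refine (Pi.basisFun ℤ _).ext ?_
    rintro (i | i)
    · rw [LinearMap.comp_apply, Pi.basisFun_apply, lapI_single_inl n k l hk hkl hn]
      simp only [map_sub, map_nsmul, hsl, hsr, sub_eq_add_neg i, AddChar.map_add_eq_mul, hq,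
        LinearMap.zero_apply]
      simp only [nsmul_eq_mul, Nat.cast_ofNat]
      ring
    · rw [LinearMap.comp_apply, Pi.basisFun_apply, lapI_single_inr n k l hk hkl hn]
      simp only [map_sub, map_nsmul, hsl, hsr, sub_eq_add_neg i, AddChar.map_add_eq_mul,
        LinearMap.zero_apply]
      simp only [nsmul_eq_mul, Nat.cast_ofNat]
      rw [hq'] at hqq
      linear_combination χ i * hqq
  refine nonempty_coker_equiv n F (rotI n) _ (commute_rotI_lapI n k l hk hkl hn) φ hroot hlap
    (Pi.single (.inl 0) 1) ?_ ?_ (aeval_rotI_FpolyI_mem n k l hk hkl hn) ?_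
  · simp [φ, Fintype.linearCombination_apply_single]
  · rw [rotI_pow_single n n .inl (Or.inl rfl)]
    simp
  · let K : Submodule ℤ (ZMod n ⊕ ZMod n → ℤ) :=
      LinearMap.range ((LinearMap.applyₗ (Pi.single (.inl 0) 1 : ZMod n ⊕ ZMod n → ℤ)) ∘ₗ
        (aeval (rotI n) : ℤ[X] →ₐ[ℤ] _).toLinearMap)
      ⊔ LinearMap.range (lapI n k l ℤ).mulVecLin
    have hul : ∀ i, Pi.single (.inl i) 1 ∈ K := by
      intro i
      refine Submodule.mem_sup_left ⟨X ^ i.val, ?_⟩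
      have := rotI_pow_single n i.val .inl (Or.inl rfl) 0
      simpa using this
    have hur : ∀ i, Pi.single (.inr i) 1 ∈ K := by
      intro i
      have h := lapI_single_inl n k l hk hkl hn i
      have h' : (Pi.single (.inr i) 1 : ZMod n ⊕ ZMod n → ℤ)
        = 3 • Pi.single (.inl i) 1 - Pi.single (.inl (i + l)) 1 - Pi.single (.inl (i - l)) 1
          - (lapI n k l ℤ).mulVecLin (Pi.single (.inl i) 1) := by rw [h]; abel
      rw [h']
      exact K.sub_mem (K.sub_mem (K.sub_mem (K.nsmul_mem (hul _) 3) (hul _)) (hul _))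
        (Submodule.mem_sup_right ⟨_, rfl⟩)
    have hK : K = ⊤ := by
      rw [eq_top_iff, ← (Pi.basisFun ℤ (ZMod n ⊕ ZMod n)).span_eq, Submodule.span_le]
      rintro _ ⟨i | i, rfl⟩
      · simpa using hul i
      · simpa using hur i
    intro y
    obtain ⟨_, ⟨p, rfl⟩, _, hz, rfl⟩ := Submodule.mem_sup.mp (hK ▸ Submodule.mem_top : y ∈ K)
    exact ⟨p, by simpa using hz⟩

/-- The Jacobian group of the I-graph `I(n,k,l)` (the torsion subgroup of the cokernel of
its Laplacian) is isomorphic as an abelian group to the torsion subgroup of the cokernel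
of `𝒜^n - I`, where `𝒜` is the companion matrix of
`F(X) = (3X^k - X^{2k} - 1)(3X^l - X^{2l} - 1) - X^{k+l}`. -/
theorem jacobian_IGraph_iso (n k l : ℕ) [NeZero n]
    (hk : 1 ≤ k) (hkl : k ≤ l) (hn : 2 * l < n) :
    Nonempty ((JacI n k l) ≃+
      AddCommGroup.torsion (cokerM (companionM (FpolyI k l) (2 * (k + l)) ^ n - 1))) := by
  obtain ⟨e₁⟩ := nonempty_coker_lapI_equiv n k l hk hkl hn
  obtain ⟨hmonic, hdeg⟩ := monic_FpolyI k l hk (hk.trans hkl)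
  obtain ⟨e₂⟩ := nonempty_coker_companionM_equiv n _ _ hmonic hdeg (by omega)
  exact nonempty_torsion_equiv (e₁.trans e₂.symm)
end

section
/- Let n, k, l be integers with 1 ≤ k ≤ l and 2l < n, and set ε_n = exp(2πi/n). Then the number of spanning trees of the I-graph I(n,k,l) satisfies, in ℂ, n·τ_{k,l}(n) = ∏_{j=1}^{n−1} ((3 − ε_n^{jk} − ε_n^{−jk})(3 − ε_n^{jl} − ε_n^{−jl}) − 1). -/
open Polynomial

/-- `g` maps every vertex of a tree rooted at `r` to its parent (and `r` to itself): all orbits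
of `g` end at the fixed point `r`. -/
structure IsParentMap {V : Type*} (r : V) (g : V → V) : Prop where
  map_root : g r = r
  reaches : ∀ v, ∃ m : ℕ, g^[m] v = r

/-- The graph joining every point to its image under `g`. -/
def functionalGraph {V : Type*} (g : V → V) : SimpleGraph V :=
  SimpleGraph.fromRel fun v w => g v = w

theorem functionalGraph_adj {V : Type*} {g : V → V} {v w : V} :
    (functionalGraph g).Adj v w ↔ v ≠ w ∧ (g v = w ∨ g w = v) :=
  SimpleGraph.fromRel_adj _ v w

namespace IsParentMap

variable {V : Type*} {r : V} {g : V → V}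

theorem ne_of_ne_root (hg : IsParentMap r g) {v : V} (hv : v ≠ r) : g v ≠ v := by
  intro h
  obtain ⟨m, hm⟩ := hg.reaches v
  exact hv (by rw [← hm, Function.iterate_fixed h])

theorem apply_apply_ne (hg : IsParentMap r g) {v : V} (hv : v ≠ r) : g (g v) ≠ v := by
  intro h
  obtain ⟨m, hm⟩ := hg.reaches v
  have hr : ∀ m, g^[m] r = r := fun m => Function.iterate_fixed hg.map_root m
  have h2 : (g^[2])^[m] v = v := Function.iterate_fixed (by simpa using h) m
  rw [← Function.iterate_mul, two_mul, Function.iterate_add_apply, hm, hr] at h2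
  exact hv h2.symm

theorem functionalGraph_connected (hg : IsParentMap r g) : (functionalGraph g).Connected := by
  have key : ∀ m v, g^[m] v = r → (functionalGraph g).Reachable v r := by
    intro m
    induction m with
    | zero => rintro v rfl; exact SimpleGraph.Reachable.refl _
    | succ m ih =>
      intro v hv
      rw [Function.iterate_succ_apply] at hv
      refine SimpleGraph.Reachable.trans ?_ (ih _ hv)
      by_cases h : v = g v
      · rw [← h]
      · exact (functionalGraph_adj.2 ⟨h, Or.inl rfl⟩).reachable
  have : Nonempty V := ⟨r⟩
  refine SimpleGraph.Connected.mk fun v w => ?_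
  obtain ⟨m, hm⟩ := hg.reaches v
  obtain ⟨m', hm'⟩ := hg.reaches w
  exact (key m v hm).trans (key m' w hm').symm

theorem eq_of_functionalGraph_le {g' : V → V} (hg : IsParentMap r g) (hg' : IsParentMap r g')
    (h : functionalGraph g' ≤ functionalGraph g) : g' = g := by
  have key : ∀ m v, g'^[m] v = r → g' v = g v := by
    intro m
    induction m with
    | zero => rintro v rfl; exact hg'.map_root.trans hg.map_root.symm
    | succ m ih =>
      intro v hv
      rw [Function.iterate_succ_apply] at hv
      by_cases hvr : v = r
      · rw [hvr, hg.map_root, hg'.map_root]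
      have hadj : (functionalGraph g).Adj v (g' v) :=
        h (functionalGraph_adj.2 ⟨(hg'.ne_of_ne_root hvr).symm, Or.inl rfl⟩)
      rcases (functionalGraph_adj.1 hadj).2 with h1 | h1
      · exact h1.symm
      · exact absurd ((ih _ hv).trans h1) (hg'.apply_apply_ne hvr)
  funext v
  obtain ⟨m, hm⟩ := hg'.reaches v
  exact key m v hm

end IsParentMap

theorem SimpleGraph.Connected.exists_isParentMap {V : Type*} {T : SimpleGraph V}
    (hT : T.Connected) (r : V) : ∃ g, IsParentMap r g ∧ functionalGraph g ≤ T := by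
  have step : ∀ v, ∃ w, (v = r → w = r) ∧ (v ≠ r → T.Adj v w ∧ T.dist w r < T.dist v r) := by
    intro v
    by_cases hv : v = r
    · exact ⟨r, fun _ => rfl, fun h => absurd hv h⟩
    obtain ⟨p, hp⟩ := hT.exists_walk_length_eq_dist v r
    cases p with
    | nil => exact absurd rfl hv
    | cons hadj q =>
      rename_i w
      refine ⟨w, fun h => absurd h hv, fun _ => ⟨hadj, ?_⟩⟩
      have := SimpleGraph.dist_le q
      rw [SimpleGraph.Walk.length_cons] at hp
      omega
  choose g hgr hg using step
  refine ⟨g, ⟨hgr r rfl, ?_⟩, ?_⟩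
  · have key : ∀ d v, T.dist v r ≤ d → ∃ m : ℕ, g^[m] v = r := by
      intro d
      induction d with
      | zero => exact fun v hv => ⟨0, hT.dist_eq_zero_iff.1 (Nat.le_zero.1 hv)⟩
      | succ d ih =>
        intro v hv
        by_cases hvr : v = r
        · exact ⟨0, hvr⟩
        obtain ⟨m, hm⟩ := ih (g v) (by have := (hg v hvr).2; omega)
        exact ⟨m + 1, hm⟩
    exact fun v => key _ v le_rfl
  · have key : ∀ v w, v ≠ w → g v = w → T.Adj v w := by
      rintro v _ hne rfl
      refine (hg v fun hv => hne ?_).1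
      rw [hgr v hv, hv]
    intro v w h
    obtain ⟨hne, h | h⟩ := functionalGraph_adj.1 h
    · exact key v w hne h
    · exact (key w v hne.symm h).symm

theorem IsParentMap.functionalGraph_isTree {V : Type*} {r : V} {g : V → V}
    (hg : IsParentMap r g) : (functionalGraph g).IsTree := by
  refine SimpleGraph.isTree_of_minimal_connected ⟨hg.functionalGraph_connected, ?_⟩
  intro T hT hle
  obtain ⟨g', hg', hle'⟩ := SimpleGraph.Connected.exists_isParentMap hT r
  rwa [hg.eq_of_functionalGraph_le hg' (hle'.trans hle)] at hle'

/-- Spanning trees of `G` correspond to parent maps along the edges of `G`. -/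
theorem card_spanningTrees_eq_card_parentMaps {V : Type*} (G : SimpleGraph V) (r : V) :
    Nat.card {H : G.Subgraph // H.IsSpanning ∧ H.coe.IsTree} =
      Nat.card {g : V → V // IsParentMap r g ∧ ∀ v, v ≠ r → G.Adj v (g v)} := by
  symm
  have hle : ∀ g : V → V, IsParentMap r g → (∀ v, v ≠ r → G.Adj v (g v)) →
      functionalGraph g ≤ G := by
    intro g hg h v w hvw
    have key : ∀ v w, v ≠ w → g v = w → G.Adj v w := by
      rintro v _ hne rfl
      exact h v fun hv => hne (by rw [hv, hg.map_root])
    obtain ⟨hne, h | h⟩ := functionalGraph_adj.1 hvw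
    · exact key v w hne h
    · exact (key w v hne.symm h).symm
  refine Nat.card_eq_of_bijective
    (fun g => ⟨SimpleGraph.toSubgraph (functionalGraph g.1) (hle g.1 g.2.1 g.2.2),
      SimpleGraph.toSubgraph.isSpanning _ _, ?_⟩) ⟨?_, ?_⟩
  · rw [← (SimpleGraph.Subgraph.spanningCoeEquivCoeOfSpanning _
      (SimpleGraph.toSubgraph.isSpanning _ _)).isTree_iff]
    exact g.2.1.functionalGraph_isTree
  · rintro ⟨g, hg, h⟩ ⟨g', hg', h'⟩ heq
    have heq' : functionalGraph g = functionalGraph g' :=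
      congrArg SimpleGraph.Subgraph.spanningCoe (congrArg Subtype.val heq)
    exact Subtype.ext (hg'.eq_of_functionalGraph_le hg heq'.le)
  · rintro ⟨H, hs, ht⟩
    rw [← (SimpleGraph.Subgraph.spanningCoeEquivCoeOfSpanning _ hs).isTree_iff] at ht
    obtain ⟨g, hg, hgle⟩ := ht.connected.exists_isParentMap r
    have hTg : functionalGraph g = H.spanningCoe :=
      le_antisymm hgle
        ((SimpleGraph.isTree_iff_minimal_connected.1 ht).2 hg.functionalGraph_connected hgle)
    refine ⟨⟨g, hg, fun v hv => H.spanningCoe_le (hgle (functionalGraph_adj.2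
      ⟨(hg.ne_of_ne_root hv).symm, Or.inl rfl⟩))⟩, Subtype.ext (SimpleGraph.Subgraph.ext ?_ ?_)⟩
    · exact hs.verts_eq_univ.symm
    · exact congrArg SimpleGraph.Adj hTg

section MatrixTree

variable {V K : Type*} [Fintype V] [DecidableEq V] [Field K]

open Matrix

/-- The matrix whose row at `r` is the unit vector at `r` and whose row at any other `v` is the
difference of the unit vectors at `v` and at `p v`. -/
def parentMatrix (K : Type*) [Field K] (r : V) (p : V → V) : Matrix V V K :=
  fun v => if v = r then Pi.single r 1 else Pi.single v 1 - Pi.single (p v) 1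

theorem parentMatrix_mulVec (r : V) (p : V → V) (x : V → K) (v : V) :
    (parentMatrix K r p *ᵥ x) v = x v - if v = r then 0 else x (p v) := by
  by_cases h : v = r
  · simp [Matrix.mulVec, parentMatrix, h]
  · have hrow : parentMatrix K r p v = Pi.single v 1 - Pi.single (p v) 1 := if_neg h
    change parentMatrix K r p v ⬝ᵥ x = _
    simp [hrow, h, sub_dotProduct]

theorem det_parentMatrix_of_isParentMap {r : V} {p : V → V} (hp : IsParentMap r p) :
    (parentMatrix K r p).det = 1 := by
  choose m hm using hp.reaches
  set M := Finset.univ.sup m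
  have hM : ∀ v, p^[M] v = r := fun v => by
    have : m v ≤ M := Finset.le_sup (Finset.mem_univ v)
    obtain ⟨d, hd⟩ := Nat.exists_eq_add_of_le this
    rw [hd, add_comm, Function.iterate_add_apply, hm, Function.iterate_fixed hp.map_root]
  set φ : Module.End K (V → K) := 1 - Matrix.toLin' (parentMatrix K r p) with hφ
  have happ : ∀ x v, φ x v = if v = r then 0 else x (p v) := by
    intro x v
    simp [hφ, parentMatrix_mulVec]
  have hpow : ∀ i x v, p^[i] v = r → (φ ^ (i + 1)) x v = 0 := by
    intro i
    induction i with
    | zero =>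
      intro x v hv
      rw [zero_add, pow_one, happ, if_pos (by simpa using hv)]
    | succ i ih =>
      intro x v hv
      rw [pow_succ', Module.End.mul_apply, happ]
      split_ifs
      · rfl
      · exact ih x (p v) (by rwa [Function.iterate_succ_apply] at hv)
  have hnil : IsNilpotent φ :=
    ⟨M + 1, LinearMap.ext fun x => funext fun v => hpow M x v (hM v)⟩
  have h1 := LinearMap.eval_charpoly φ (1 : K)
  rw [hnil.charpoly_eq_X_pow_finrank, map_one, hφ, sub_sub_cancel, LinearMap.det_toLin'] at h1
  simpa using h1.symm

theorem det_parentMatrix_of_not_isParentMap {r : V} {p : V → V} (hr : p r = r)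
    (hp : ¬ IsParentMap r p) : (parentMatrix K r p).det = 0 := by
  classical
  obtain ⟨v, hv⟩ : ∃ v, ¬ ∃ m : ℕ, p^[m] v = r := by
    by_contra! h
    exact hp ⟨hr, h⟩
  refine Matrix.exists_mulVec_eq_zero_iff.1
    ⟨fun w => if ∃ m : ℕ, p^[m] w = r then 0 else 1, ?_, ?_⟩
  · intro h
    simpa [hv] using congrFun h v
  · funext w
    rw [parentMatrix_mulVec]
    by_cases hw : w = r
    · simp [hw, show ∃ m : ℕ, p^[m] r = r from ⟨0, rfl⟩]
    · have : (∃ m : ℕ, p^[m] w = r) ↔ ∃ m : ℕ, p^[m] (p w) = r := by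
        constructor
        · rintro ⟨m, hm⟩
          cases m with
          | zero => exact absurd hm hw
          | succ m => exact ⟨m, hm⟩
        · rintro ⟨m, hm⟩
          exact ⟨m + 1, hm⟩
      simp [hw, this]

variable (G : SimpleGraph V) [DecidableRel G.Adj]

theorem SimpleGraph.lapMatrix_row (v : V) :
    G.lapMatrix K v = ∑ w ∈ G.neighborFinset v, (Pi.single v 1 - Pi.single w 1) := by
  funext j
  simp [SimpleGraph.lapMatrix, SimpleGraph.degMatrix, Matrix.diagonal_apply,
    SimpleGraph.adjMatrix_apply, Finset.sum_apply, Pi.single_apply, eq_comm]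

/-- The **matrix tree theorem**: a principal minor of the Laplacian, written as the determinant
of the Laplacian with one row replaced by a unit vector, counts the spanning trees. -/
theorem SimpleGraph.det_lapMatrix_updateRow_single (r : V) :
    ((G.lapMatrix K).updateRow r (Pi.single r 1)).det =
      (Nat.card {H : G.Subgraph // H.IsSpanning ∧ H.coe.IsTree} : K) := by
  classical
  have hrow : (G.lapMatrix K).updateRow r (Pi.single r 1) =
      fun v => ∑ w ∈ (if v = r then {r} else G.neighborFinset v),
        if v = r then Pi.single r 1 else Pi.single v 1 - Pi.single w 1 := by
    funext v
    by_cases hv : v = r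
    · subst hv; simp
    · rw [Matrix.updateRow_ne hv, SimpleGraph.lapMatrix_row]
      simp [hv]
  have hexp := (Matrix.detRowAlternating (n := V) (R := K)).toMultilinearMap.map_sum_finset
    (fun v w => if v = r then Pi.single r 1 else Pi.single v 1 - Pi.single w 1)
    (fun v => if v = r then {r} else G.neighborFinset v)
  rw [card_spanningTrees_eq_card_parentMaps G r, hrow]
  refine hexp.trans ?_
  have hmem : ∀ p, p ∈ Fintype.piFinset (fun v => if v = r then {r} else G.neighborFinset v) ↔
      p r = r ∧ ∀ v, v ≠ r → G.Adj v (p v) := by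
    intro p
    rw [Fintype.mem_piFinset]
    constructor
    · intro h
      exact ⟨by simpa using h r, fun v hv => by simpa [hv] using h v⟩
    · rintro ⟨h1, h2⟩ v
      by_cases hv : v = r
      · simp [hv, h1]
      · simpa [hv] using h2 v hv
  have hterm : ∀ p ∈ Fintype.piFinset (fun v => if v = r then {r} else G.neighborFinset v),
      (parentMatrix K r p).det = if IsParentMap r p then 1 else 0 := by
    intro p hp
    split_ifs with h
    · exact det_parentMatrix_of_isParentMap h
    · exact det_parentMatrix_of_not_isParentMap ((hmem p).1 hp).1 h
  refine (Finset.sum_congr rfl hterm).trans ?_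
  rw [Finset.sum_boole, Nat.card_eq_fintype_card, Fintype.card_subtype]
  congr 2
  ext p
  rw [Finset.mem_filter, hmem, Finset.mem_filter]
  exact ⟨fun h => ⟨Finset.mem_univ _, h.2, h.1.2⟩, fun h => ⟨⟨h.2.1.map_root, h.2.2⟩, h.2.1⟩⟩

theorem SimpleGraph.lapMatrix_sum_row (v : V) : ∑ w, G.lapMatrix K v w = 0 := by
  have := congrFun (G.lapMatrix_mulVec_const_eq_zero (R := K)) v
  simpa [Matrix.mulVec, dotProduct] using this

theorem SimpleGraph.det_lapMatrix_updateRow (r : V) (x : V → K) :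
    ((G.lapMatrix K).updateRow r x).det =
      (∑ v, x v) * (Nat.card {H : G.Subgraph // H.IsSpanning ∧ H.coe.IsTree} : K) := by
  rw [← G.det_lapMatrix_updateRow_single r, ← Matrix.det_updateRow_smul, ← sub_eq_zero]
  have h0 : ((G.lapMatrix K).updateRow r (x - (∑ v, x v) • Pi.single r 1)).det = 0 := by
    refine Matrix.exists_mulVec_eq_zero_iff.1 ⟨fun _ => 1, fun h => ?_, ?_⟩
    · simpa using congrFun h r
    · funext v
      by_cases hv : v = r
      · subst hv
        simp [Matrix.mulVec, dotProduct, ← Finset.mul_sum]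
      · simpa [Matrix.mulVec, dotProduct, hv] using G.lapMatrix_sum_row v
  have hadd := Matrix.det_updateRow_add (G.lapMatrix K) r
    (x - (∑ v, x v) • Pi.single r 1) ((∑ v, x v) • Pi.single r 1)
  rw [h0, zero_add, sub_add_cancel] at hadd
  rw [hadd, sub_self]

/-- A rank one perturbation of the Laplacian detects the number of spanning trees. -/
theorem SimpleGraph.det_lapMatrix_add_vecMulVec (r : V) (a : V → K) :
    (G.lapMatrix K + Matrix.vecMulVec a a).det =
      (∑ v, a v) ^ 2 * (Nat.card {H : G.Subgraph // H.IsSpanning ∧ H.coe.IsTree} : K) := by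
  have hsum : ∑ v, (1 : K) • (G.lapMatrix K + Matrix.vecMulVec a a) v = (∑ v, a v) • a := by
    funext w
    have hcol : ∑ v, G.lapMatrix K v w = 0 := by
      rw [← G.lapMatrix_sum_row (K := K) w]
      exact Finset.sum_congr rfl fun v _ => (G.isSymm_lapMatrix K).apply w v
    rw [Finset.sum_apply]
    simp [Finset.sum_add_distrib, hcol, Matrix.vecMulVec_apply, Finset.sum_mul]
  have h1 := Matrix.det_updateRow_sum (G.lapMatrix K + Matrix.vecMulVec a a) r fun _ => 1
  rw [hsum, one_smul, Matrix.det_updateRow_smul] at h1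
  have h2 : ((G.lapMatrix K + Matrix.vecMulVec a a).updateRow r a).det =
      ((G.lapMatrix K).updateRow r a).det := by
    refine Matrix.det_eq_of_forall_row_eq_smul_add_const (fun v => if v = r then 0 else a v) r
      (if_pos rfl) fun v w => ?_
    by_cases hv : v = r
    · subst hv; simp
    · simp [hv, Matrix.vecMulVec_apply]
  rw [← h1, h2, G.det_lapMatrix_updateRow, sq, mul_assoc]

end MatrixTree

section Circulant

open Matrix

/-- The circulant matrix `3 - S - S⁻¹ + c J`, where `S` is the cyclic shift by `s` and `J` the
all-ones matrix. -/
def stepMatrix {n : ℕ} (s : ZMod n) (c : ℂ) : Matrix (ZMod n) (ZMod n) ℂ :=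
  fun i j => (if j = i then 3 else 0) - (if j = i + s then 1 else 0) -
    (if j = i - s then 1 else 0) + c

theorem IGraph_adj_inl_inl {n k l : ℕ} {i j : ZMod n} :
    (IGraph n k l).Adj (.inl i) (.inl j) ↔
      i ≠ j ∧ (j = i + (l : ZMod n) ∨ i = j + (l : ZMod n)) := by
  simp [IGraph, IRel]

theorem IGraph_adj_inr_inr {n k l : ℕ} {i j : ZMod n} :
    (IGraph n k l).Adj (.inr i) (.inr j) ↔
      i ≠ j ∧ (j = i + (k : ZMod n) ∨ i = j + (k : ZMod n)) := by
  simp [IGraph, IRel]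

theorem IGraph_adj_inl_inr {n k l : ℕ} {i j : ZMod n} :
    (IGraph n k l).Adj (.inl i) (.inr j) ↔ i = j := by
  simp [IGraph, IRel]

theorem add_ne_sub_of_add_self_ne_zero {n : ℕ} {s : ZMod n} (hs : s + s ≠ 0) (i : ZMod n) :
    i + s ≠ i - s := by
  intro h
  apply hs
  linear_combination h

variable {n : ℕ} [NeZero n]

theorem neighborFinset_inl {k l : ℕ} (hl : (l : ZMod n) ≠ 0) (i : ZMod n) :
    (IGraph n k l).neighborFinset (.inl i) = {.inl (i + l), .inl (i - l), .inr i} := by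
  ext (j | j)
  · have : i = j + (l : ZMod n) ↔ j = i - l := by rw [eq_sub_iff_add_eq, eq_comm]
    simp only [SimpleGraph.mem_neighborFinset, IGraph_adj_inl_inl, this, Finset.mem_insert,
      Finset.mem_singleton, Sum.inl.injEq, reduceCtorEq, or_false, and_iff_right_iff_imp]
    rintro (rfl | rfl)
    · simpa using hl
    · simpa [eq_sub_iff_add_eq] using hl
  · simp [IGraph_adj_inl_inr, eq_comm]

theorem neighborFinset_inr {k l : ℕ} (hk : (k : ZMod n) ≠ 0) (i : ZMod n) :
    (IGraph n k l).neighborFinset (.inr i) = {.inr (i + k), .inr (i - k), .inl i} := by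
  ext (j | j)
  · simp [SimpleGraph.adj_comm _ (Sum.inr i), IGraph_adj_inl_inr]
  · have : i = j + (k : ZMod n) ↔ j = i - k := by rw [eq_sub_iff_add_eq, eq_comm]
    simp only [SimpleGraph.mem_neighborFinset, IGraph_adj_inr_inr, this, Finset.mem_insert,
      Finset.mem_singleton, Sum.inr.injEq, reduceCtorEq, or_false, and_iff_right_iff_imp]
    rintro (rfl | rfl)
    · simpa using hk
    · simpa [eq_sub_iff_add_eq] using hk

theorem lapMatrix_IGraph_add_vecMulVec {k l : ℕ} (hk : (k : ZMod n) + k ≠ 0)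
    (hl : (l : ZMod n) + l ≠ 0) :
    (IGraph n k l).lapMatrix ℂ + vecMulVec (Sum.elim 1 0) (Sum.elim 1 0) =
      fromBlocks (stepMatrix (l : ZMod n) 1) (-1) (-1) (stepMatrix (k : ZMod n) 0) := by
  have hk0 : (k : ZMod n) ≠ 0 := fun h => hk (by simp [h])
  have hl0 : (l : ZMod n) ≠ 0 := fun h => hl (by simp [h])
  have hkne := add_ne_sub_of_add_self_ne_zero hk
  have hlne := add_ne_sub_of_add_self_ne_zero hl
  ext (i | i) j
  · have hrow := (IGraph n k l).lapMatrix_row (K := ℂ) (.inl i)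
    rw [neighborFinset_inl hl0, Finset.sum_insert (by simp [hlne i]),
      Finset.sum_insert (by simp), Finset.sum_singleton] at hrow
    rw [Matrix.add_apply, hrow]
    rcases j with j | j
    · simp only [Pi.add_apply, Pi.sub_apply, Pi.single_apply, vecMulVec_apply, Sum.elim_inl,
        Pi.one_apply, fromBlocks_apply₁₁, stepMatrix, Sum.inl.injEq, reduceCtorEq, if_false]
      split_ifs <;> ring
    · simp [Pi.single_apply, vecMulVec_apply, Matrix.one_apply, eq_comm]
  · have hrow := (IGraph n k l).lapMatrix_row (K := ℂ) (.inr i)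
    rw [neighborFinset_inr hk0, Finset.sum_insert (by simp [hkne i]),
      Finset.sum_insert (by simp), Finset.sum_singleton] at hrow
    rw [Matrix.add_apply, hrow]
    rcases j with j | j
    · simp [Pi.single_apply, vecMulVec_apply, Matrix.one_apply, eq_comm]
    · simp only [Pi.add_apply, Pi.sub_apply, Pi.single_apply, vecMulVec_apply, Sum.elim_inr,
        Pi.zero_apply, fromBlocks_apply₂₂, stepMatrix, Sum.inr.injEq, reduceCtorEq, if_false]
      split_ifs <;> ring

theorem Matrix.det_fromBlocks_neg_one_neg_one {m R : Type*} [Fintype m] [DecidableEq m]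
    [CommRing R] (A B : Matrix m m R) :
    (fromBlocks A (-1) (-1) B).det = (A * B - 1).det := by
  have hJ : (fromBlocks 0 (-1) 1 0 : Matrix (m ⊕ m) (m ⊕ m) R).det = 1 := by
    have h : (fromBlocks 0 (-1) 1 0 : Matrix (m ⊕ m) (m ⊕ m) R) * fromBlocks 1 1 0 1 =
        fromBlocks 1 0 0 1 * fromBlocks 0 (-1) 1 1 := by
      simp [fromBlocks_multiply]
    have h' := congrArg det h
    rw [det_mul, det_mul, det_fromBlocks_zero₂₁, det_fromBlocks_zero₂₁,
      det_fromBlocks_one₂₂] at h'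
    simpa using h'
  rw [← mul_one (det _), ← hJ, ← det_mul, fromBlocks_multiply]
  simp only [Matrix.mul_zero, Matrix.mul_one, Matrix.mul_neg, zero_add, add_zero, neg_neg]
  rw [det_fromBlocks_one₂₂]
  congr 1
  rw [Matrix.neg_mul]
  abel

/-- The Fourier matrix of `ZMod n`. -/
noncomputable def fourierMatrix (n : ℕ) [NeZero n] : Matrix (ZMod n) (ZMod n) ℂ :=
  fun i m => ZMod.stdAddChar (i * m)

theorem det_fourierMatrix_ne_zero : (fourierMatrix n).det ≠ 0 := by
  intro h
  obtain ⟨x, hx, hmul⟩ := Matrix.exists_vecMul_eq_zero_iff.2 h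
  apply hx
  funext j
  have h0 : ∑ m, (x ᵥ* fourierMatrix n) m * ZMod.stdAddChar (-(j * m)) = n * x j := by
    simp only [vecMul, dotProduct, fourierMatrix, Finset.sum_mul]
    rw [Finset.sum_comm, Finset.sum_eq_single j]
    · simp [mul_assoc, ← AddChar.map_add_eq_mul]
    · intro i _ hij
      have hs := AddChar.sum_mulShift (i - j) (ZMod.isPrimitive_stdAddChar n)
      rw [if_neg (sub_ne_zero.2 hij)] at hs
      simp only [mul_assoc, ← AddChar.map_add_eq_mul, ← Finset.mul_sum]
      rw [Finset.sum_congr rfl fun m _ => by rw [show i * m + -(j * m) = m * (i - j) by ring], hs]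
      simp
    · simp
  rw [hmul] at h0
  have hn : (n : ℂ) ≠ 0 := Nat.cast_ne_zero.2 (NeZero.ne n)
  simpa [hn] using h0.symm

/-- The eigenvalues of `stepMatrix s c`. -/
noncomputable def stepEigenvalue (s : ZMod n) (c : ℂ) (m : ZMod n) : ℂ :=
  3 - ZMod.stdAddChar (s * m) - (ZMod.stdAddChar (s * m))⁻¹ + if m = 0 then c * n else 0

theorem stepMatrix_mul_fourierMatrix (s : ZMod n) (c : ℂ) :
    stepMatrix s c * fourierMatrix n = fourierMatrix n * diagonal (stepEigenvalue s c) := by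
  ext i m
  rw [mul_diagonal, Matrix.mul_apply]
  have hs := AddChar.sum_mulShift m (ZMod.isPrimitive_stdAddChar n)
  have hc : ∑ j : ZMod n, c * ZMod.stdAddChar (j * m) =
      ZMod.stdAddChar (i * m) * if m = 0 then c * n else 0 := by
    rw [← Finset.mul_sum, hs]
    by_cases hm : m = 0 <;> simp [hm, ZMod.card]
  simp only [stepMatrix, fourierMatrix, stepEigenvalue, add_mul, sub_mul, ite_mul, zero_mul,
    one_mul, Finset.sum_add_distrib, Finset.sum_sub_distrib, Finset.sum_ite_eq',
    Finset.mem_univ, if_true, hc, AddChar.map_add_eq_mul,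
    AddChar.map_sub_eq_div]
  rw [div_eq_mul_inv]
  ring

theorem det_stepMatrix_mul_stepMatrix_sub_one (s t : ZMod n) (c d : ℂ) :
    (stepMatrix s c * stepMatrix t d - 1).det =
      ∏ m, (stepEigenvalue s c m * stepEigenvalue t d m - 1) := by
  have h : (stepMatrix s c * stepMatrix t d - 1) * fourierMatrix n = fourierMatrix n *
      diagonal fun m => stepEigenvalue s c m * stepEigenvalue t d m - 1 := by
    have hD : (diagonal fun m => stepEigenvalue s c m * stepEigenvalue t d m - 1) =
        diagonal (stepEigenvalue s c) * diagonal (stepEigenvalue t d) - 1 := by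
      rw [diagonal_mul_diagonal, ← diagonal_one, diagonal_sub]
    rw [hD, Matrix.sub_mul, Matrix.mul_assoc, stepMatrix_mul_fourierMatrix, ← Matrix.mul_assoc,
      stepMatrix_mul_fourierMatrix, Matrix.mul_sub, Matrix.mul_assoc, Matrix.one_mul,
      Matrix.mul_one]
  have h' := congrArg det h
  rw [det_mul, det_mul, det_diagonal, mul_comm] at h'
  exact mul_left_cancel₀ det_fourierMatrix_ne_zero h'

theorem ZMod.prod_univ_eq_prod_range {M : Type*} [CommMonoid M] (f : ZMod n → M) :
    ∏ m, f m = ∏ j ∈ Finset.range n, f (j : ZMod n) := by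
  symm
  refine Finset.prod_bij' (fun j _ => (j : ZMod n)) (fun m _ => m.val) (by simp) ?_ ?_ ?_ ?_
  · exact fun m _ => Finset.mem_range.2 (ZMod.val_lt m)
  · exact fun j hj => ZMod.val_cast_of_lt (Finset.mem_range.1 hj)
  · simp
  · simp

theorem stdAddChar_natCast_mul (s j : ℕ) :
    ZMod.stdAddChar ((s : ZMod n) * (j : ZMod n)) =
      Complex.exp (2 * Real.pi * Complex.I / n) ^ (j * s) := by
  have h := ZMod.stdAddChar_coe (N := n) ((j * s : ℕ) : ℤ)
  rw [← Complex.exp_nat_mul, show (s : ZMod n) * j = (((j * s : ℕ) : ℤ) : ZMod n) by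
    push_cast; ring, h]
  congr 1
  push_cast
  ring

end Circulant

theorem natCast_add_self_ne_zero {n s : ℕ} (hs : 1 ≤ s) (hn : 2 * s < n) :
    (s : ZMod n) + s ≠ 0 := by
  rw [← Nat.cast_add, Ne, ZMod.natCast_eq_zero_iff]
  intro h
  have := Nat.le_of_dvd (by omega) h
  omega

open Finset in
/-- `n·τ_{k,l}(n) = ∏_{j=1}^{n-1} ((3 - ε^{jk} - ε^{-jk})(3 - ε^{jl} - ε^{-jl}) - 1)`
in `ℂ`, with `ε = exp(2πi/n)`. -/
theorem n_mul_tau_IGraph (n k l : ℕ) (hk : 1 ≤ k) (hkl : k ≤ l) (hn : 2 * l < n) :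
    (n : ℂ) * (tauI n k l : ℂ) =
      ∏ j ∈ Finset.Ico 1 n,
        ((3 - Complex.exp (2 * Real.pi * Complex.I / n) ^ (j * k) -
            (Complex.exp (2 * Real.pi * Complex.I / n) ^ (j * k))⁻¹) *
          (3 - Complex.exp (2 * Real.pi * Complex.I / n) ^ (j * l) -
            (Complex.exp (2 * Real.pi * Complex.I / n) ^ (j * l))⁻¹) - 1) := by
  have : NeZero n := ⟨by omega⟩
  have hn0 : (n : ℂ) ≠ 0 := Nat.cast_ne_zero.2 (NeZero.ne n)
  have h := (IGraph n k l).det_lapMatrix_add_vecMulVec (K := ℂ) (.inl 0) (Sum.elim 1 0)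
  rw [lapMatrix_IGraph_add_vecMulVec (natCast_add_self_ne_zero hk (by omega))
    (natCast_add_self_ne_zero (hk.trans hkl) hn), Matrix.det_fromBlocks_neg_one_neg_one,
    det_stepMatrix_mul_stepMatrix_sub_one, ZMod.prod_univ_eq_prod_range,
    Finset.prod_range_eq_mul_Ico _ (by omega)] at h
  have hzero : stepEigenvalue (l : ZMod n) 1 ((0 : ℕ) : ZMod n) *
      stepEigenvalue (k : ZMod n) 0 ((0 : ℕ) : ZMod n) - 1 = n := by
    simp [stepEigenvalue]
    ring
  have hsum : ∑ v : ZMod n ⊕ ZMod n, (Sum.elim 1 0 v : ℂ) = n := by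
    simp [ZMod.card]
  rw [hzero, hsum, sq, mul_assoc] at h
  refine (mul_left_cancel₀ hn0 h).symm.trans (Finset.prod_congr rfl fun j hj => ?_)
  obtain ⟨hj1, hj2⟩ := Finset.mem_Ico.1 hj
  have hj0 : (j : ZMod n) ≠ 0 := by
    rw [Ne, ZMod.natCast_eq_zero_iff]
    exact fun h => absurd (Nat.le_of_dvd hj1 h) (by omega)
  simp only [stepEigenvalue, stdAddChar_natCast_mul, if_neg hj0]
  ring
end
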